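/- For any n ≥ 2, no optimal set of n-means for P contains a point of the open interval (1/4, 1/2). -/

import Mathlib

open MeasureTheory Set
open scoped ENNReal Classical

noncomputable section

/-- The similarity map `S₁(x) = x/4`. -/
def S1 (x : ℝ) : ℝ := x / 4

/-- The similarity map `S₂(x) = x/2 + 1/2`. -/
def S2 (x : ℝ) : ℝ := x / 2 + 1 / 2

/-- `P` satisfies the self-similarity relation `P = (1/4)·P∘S₁⁻¹ + (3/4)·P∘S₂⁻¹`. -/
def SelfSimilar (P : Measure ℝ) : Prop :=
  P = (1/4 : ℝ≥0∞) • P.map S1 + (3/4 : ℝ≥0∞) • P.map S2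

/-- For a word `σ` over `{1,2}` (encoded as `Fin 2`, `0 ↦ S₁`, `1 ↦ S₂`),
the composition `S_σ = S_{σ₁} ∘ ⋯ ∘ S_{σ_k}`. -/
def Sw : List (Fin 2) → ℝ → ℝ
  | [] => id
  | i :: σ => (if i = 0 then S1 else S2) ∘ Sw σ

/-- `p_σ`, the product of the probabilities `p₁ = 1/4`, `p₂ = 3/4` along `σ`. -/
def pw : List (Fin 2) → ℝ
  | [] => 1
  | i :: σ => (if i = 0 then (1:ℝ)/4 else 3/4) * pw σ

/-- `s_σ`, the product of the contraction ratios `s₁ = 1/4`, `s₂ = 1/2` along `σ`. -/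
def sw : List (Fin 2) → ℝ
  | [] => 1
  | i :: σ => (if i = 0 then (1:ℝ)/4 else 1/2) * sw σ

/-- `c(σ)`, the number of occurrences of the symbol `1` (encoded `0`) in `σ`. -/
def cnt (σ : List (Fin 2)) : ℕ := σ.count 0

/-- The cylinder interval `J_σ = S_σ([0,1])`. -/
def J (σ : List (Fin 2)) : Set ℝ := Sw σ '' Set.Icc 0 1

/-- The distortion error `V(P;α) = ∫ min_{a ∈ α} (x-a)² dP`. -/
def distortion (P : Measure ℝ) (α : Finset ℝ) : ℝ :=
  ∫ x, sInf ((fun a => (x - a) ^ 2) '' (α : Set ℝ)) ∂P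

/-- The `n`-th quantization error `V_n`. -/
def qError (P : Measure ℝ) (n : ℕ) : ℝ :=
  sInf {e | ∃ α : Finset ℝ, α.Nonempty ∧ α.card ≤ n ∧ e = distortion P α}

/-- `α` is an optimal set of `n`-means for `P`. -/
def IsOptimal (P : Measure ℝ) (n : ℕ) (α : Finset ℝ) : Prop :=
  α.Nonempty ∧ α.card ≤ n ∧ distortion P α = qError P n

/-- `q_σ := P(J_σ) · λ(J_σ)²`. -/
def qnt (P : Measure ℝ) (σ : List (Fin 2)) : ℝ :=
  (P (J σ)).toReal * ((volume (J σ)).toReal) ^ 2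

/-!
Suppose that an optimal set `α` has a point `a` in the gap `(1 / 4, 1 / 2)`. Since `P` does not
charge the gap, moving `a` to one of its end points improves `α` unless every other point lies below
`1 / 2 - a` or above `1 - a`. Hence `a` alone has to serve both the right part of `[0, 1 / 4]` and
`[1 / 2, 1 - a]`, which is expensive.

If `α` has a point below `a`, then replacing all points up to `a` by `1 / 6` and a point of
`[a, 1 - a]` is cheaper. So `a` is the leftmost point. If three points are allowed, the cost on
`[0, 1 / 4]` and `[1 / 2, 5 / 8]` alone exceeds that of `{1 / 6, 7 / 12, 11 / 12}`. If only two are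
allowed, then `α ⊆ {a, b}` with `1 - a < b ≤ 1`, and the cost of a pair is governed by
`Φ t = E (t - X)⁺`. The recursion `Φ t = Φ (4 t) / 16 + 3 / 8 Φ (2 t - 1)` gives `Φ t ≤ 3 / 8 t²`,
which is sharp enough to show that `{1 / 6, 5 / 6}` is cheaper than `{a, b}`.
-/

/-! ### Quantization of a general measure -/

section Distortion

/-- The squared distance `min_{a ∈ α} (x - a)²` from `x` to the finite set `α`, the integrand of
`distortion`. It is meaningful for nonempty `α` only: `minSqDist ∅ x = sInf ∅ = 0`. -/
def minSqDist (α : Finset ℝ) (x : ℝ) : ℝ :=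
  sInf ((fun a => (x - a) ^ 2) '' (α : Set ℝ))

variable {α β : Finset ℝ} {a b c x y m : ℝ} {n : ℕ} {μ : Measure ℝ}

lemma distortion_eq_integral_minSqDist (μ : Measure ℝ) (α : Finset ℝ) :
    distortion μ α = ∫ x, minSqDist α x ∂μ :=
  rfl

lemma minSqDist_le (ha : a ∈ α) (x : ℝ) : minSqDist α x ≤ (x - a) ^ 2 :=
  csInf_le (α.finite_toSet.image _).bddBelow (mem_image_of_mem _ ha)

lemma le_minSqDist (hα : α.Nonempty) (h : ∀ a ∈ α, m ≤ (x - a) ^ 2) : m ≤ minSqDist α x :=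
  le_csInf (hα.to_set.image _) (forall_mem_image.mpr h)

lemma minSqDist_nonneg (α : Finset ℝ) (x : ℝ) : 0 ≤ minSqDist α x :=
  Real.sInf_nonneg (forall_mem_image.mpr fun _ _ => sq_nonneg _)

lemma exists_minSqDist_eq (hα : α.Nonempty) (x : ℝ) :
    ∃ a ∈ α, minSqDist α x = (x - a) ^ 2 := by
  obtain ⟨a, ha, hmin⟩ := α.exists_min_image (fun a => (x - a) ^ 2) hα
  exact ⟨a, ha, (minSqDist_le ha x).antisymm (le_minSqDist hα hmin)⟩

lemma minSqDist_anti (hα : α.Nonempty) (h : α ⊆ β) (x : ℝ) : minSqDist β x ≤ minSqDist α x :=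
  le_minSqDist hα fun _ ha => minSqDist_le (h ha) x

lemma minSqDist_pair (a b x : ℝ) : minSqDist {a, b} x = min ((x - a) ^ 2) ((x - b) ^ 2) := by
  refine le_antisymm (le_min (minSqDist_le (by simp) x) (minSqDist_le (by simp) x)) ?_
  exact le_minSqDist (by simp) (by simp)

lemma continuous_minSqDist (hα : α.Nonempty) : Continuous (minSqDist α) := by
  have hinf : minSqDist α = fun x => α.inf' hα fun a => (x - a) ^ 2 := by
    funext x
    exact le_antisymm (Finset.le_inf' _ _ fun a ha => minSqDist_le ha x)
      (le_minSqDist hα fun a ha => Finset.inf'_le (fun a => (x - a) ^ 2) ha)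
  rw [hinf]
  exact Continuous.finset_inf'_apply hα fun a _ => by fun_prop

/-- The parabola `t ↦ t²` lies above its tangent at `l`; this trades the squared distance for an
expression affine in `δ`, whose integral is explicit. -/
lemma tangent_le_minSqDist {δ l : ℝ} (hα : α.Nonempty) (hl : 0 ≤ l) (h : ∀ z ∈ α, δ ≤ |x - z|) :
    2 * l * δ - l ^ 2 ≤ minSqDist α x := by
  refine le_minSqDist hα fun z hz => ?_
  calc 2 * l * δ - l ^ 2 ≤ 2 * l * |x - z| - l ^ 2 := by gcongr; exact h z hz
    _ ≤ |x - z| ^ 2 := by linarith [sq_nonneg (|x - z| - l)]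
    _ = (x - z) ^ 2 := sq_abs _

lemma distortion_nonneg (μ : Measure ℝ) (α : Finset ℝ) : 0 ≤ distortion μ α :=
  integral_nonneg (minSqDist_nonneg α)

lemma distortion_insert_lt (hβ : β.Nonempty) (hint : ∀ γ : Finset ℝ, γ.Nonempty →
    Integrable (minSqDist γ) μ) (hy : y ∈ μ.support) (hyβ : y ∉ β) :
    distortion μ (insert y β) < distortion μ β := by
  have hβ' : (insert y β).Nonempty := Finset.insert_nonempty y β
  set gain : ℝ → ℝ := fun x => minSqDist β x - minSqDist (insert y β) x with hgain
  have gain_nonneg : 0 ≤ gain := fun x =>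
    sub_nonneg.mpr (minSqDist_anti hβ (Finset.subset_insert y β) x)
  have gain_pos : 0 < gain y := by
    obtain ⟨z, hz, hyz⟩ := exists_minSqDist_eq hβ y
    have hzero : minSqDist (insert y β) y ≤ 0 := by
      simpa using minSqDist_le (Finset.mem_insert_self y β) y
    have hpos : 0 < (y - z) ^ 2 := by
      have : y - z ≠ 0 := sub_ne_zero.mpr fun h => hyβ (h ▸ hz)
      positivity
    simp only [hgain]
    linarith
  have gain_cont : Continuous gain := (continuous_minSqDist hβ).sub (continuous_minSqDist hβ')
  have hsupp : 0 < μ (Function.support gain) :=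
    (Measure.mem_support_iff_forall y).mp hy _
      (gain_cont.isOpen_support.mem_nhds gain_pos.ne')
  have hint_pos : 0 < ∫ x, gain x ∂μ :=
    (integral_pos_iff_support_of_nonneg gain_nonneg ((hint _ hβ).sub (hint _ hβ'))).mpr hsupp
  rw [hgain, integral_sub (hint _ hβ) (hint _ hβ')] at hint_pos
  simpa only [distortion_eq_integral_minSqDist] using sub_pos.mp hint_pos

namespace IsOptimal

lemma distortion_le (hα : IsOptimal μ n α) (hβ : β.Nonempty) (hcard : β.card ≤ n) :
    distortion μ α ≤ distortion μ β := by
  rw [hα.2.2]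
  refine csInf_le ⟨0, ?_⟩ ⟨β, hβ, hcard, rfl⟩
  rintro _ ⟨γ, -, -, rfl⟩
  exact distortion_nonneg μ γ

/-- Otherwise replacing `a` by `c` does not increase the distortion, so by optimality it changes
nothing almost everywhere; then `b` alone already does the work of `a`, and the point saved by
dropping `a` can be spent on a strict improvement. -/
lemma not_ae_sq_sub_lt_or_le (hα : IsOptimal μ n α) (hint : ∀ γ : Finset ℝ, γ.Nonempty →
    Integrable (minSqDist γ) μ) (hsupp : μ.support.Infinite) (ha : a ∈ α) (hb : b ∈ α)
    (hba : b ≠ a) (c : ℝ) :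
    ¬ ∀ᵐ x ∂μ, (x - c) ^ 2 < (x - a) ^ 2 ∨ (x - b) ^ 2 ≤ (x - a) ^ 2 := by
  intro hswap
  have hb' : b ∈ α.erase a := Finset.mem_erase.mpr ⟨hba, hb⟩
  have hcard (y : ℝ) : (insert y (α.erase a)).card ≤ n :=
    (Finset.card_insert_le y _).trans ((Finset.card_erase_add_one ha).trans_le hα.2.1)
  have hne (y : ℝ) : (insert y (α.erase a)).Nonempty := Finset.insert_nonempty _ _
  have replace_le : minSqDist (insert c (α.erase a)) ≤ᵐ[μ] minSqDist α := by
    filter_upwards [hswap] with x hx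
    refine le_minSqDist hα.1 fun z hz => ?_
    rcases eq_or_ne z a with rfl | hza
    · rcases hx with hc | hb
      · exact (minSqDist_le (Finset.mem_insert_self _ _) x).trans hc.le
      · exact (minSqDist_le (Finset.mem_insert_of_mem hb') x).trans hb
    · exact minSqDist_le (Finset.mem_insert_of_mem (Finset.mem_erase.mpr ⟨hza, hz⟩)) x
  have replace_eq : minSqDist (insert c (α.erase a)) =ᵐ[μ] minSqDist α :=
    (integral_eq_iff_of_ae_le (hint _ (hne c)) (hint _ hα.1) replace_le).mp <|
      (integral_mono_ae (hint _ (hne c)) (hint _ hα.1) replace_le).antisymm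
        (hα.distortion_le (hne c) (hcard c))
  have erase_le : minSqDist (α.erase a) ≤ᵐ[μ] minSqDist α := by
    filter_upwards [hswap, replace_eq] with x hx hxeq
    obtain ⟨z, hz, hxz⟩ := exists_minSqDist_eq hα.1 x
    rw [hxz]
    rcases eq_or_ne z a with rfl | hza
    · rcases hx with hc | hb
      · linarith [minSqDist_le (Finset.mem_insert_self c (α.erase z)) x]
      · exact (minSqDist_le hb' x).trans hb
    · exact minSqDist_le (Finset.mem_erase.mpr ⟨hza, hz⟩) x
  obtain ⟨y, hy, hyα⟩ := hsupp.exists_notMem_finset (α.erase a)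
  exact absurd (hα.distortion_le (hne y) (hcard y)) <| not_le.mpr <|
    (distortion_insert_lt ⟨b, hb'⟩ hint hy hyα).trans_le
      (integral_mono_ae (hint _ ⟨b, hb'⟩) (hint _ hα.1) erase_le)

end IsOptimal

end Distortion

lemma mapsTo_support_of_smul_map_le {X : Type*} [TopologicalSpace X] [MeasurableSpace X]
    [BorelSpace X] {μ : Measure X} {f : X → X} (hf : Continuous f) {c : ℝ≥0∞} (hc : c ≠ 0)
    (h : c • μ.map f ≤ μ) : MapsTo f μ.support μ.support := by
  intro x hx
  rw [Measure.mem_support_iff_forall] at hx ⊢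
  intro U hU
  calc 0 < c * μ (f ⁻¹' U) := ENNReal.mul_pos hc (hx _ (hf.continuousAt hU)).ne'
    _ ≤ c * μ.map f U := by gcongr c * ?_; exact Measure.le_map_apply hf.aemeasurable U
    _ ≤ μ U := h U

/-! ### The self-similar measure -/

lemma continuous_S1 : Continuous S1 := by unfold S1; fun_prop

lemma continuous_S2 : Continuous S2 := by unfold S2; fun_prop

namespace SelfSimilar

section Measure

variable {P : Measure ℝ}

lemma measure_eq (hP : SelfSimilar P) {A : Set ℝ} (hA : MeasurableSet A) :
    P A = 1 / 4 * P (S1 ⁻¹' A) + 3 / 4 * P (S2 ⁻¹' A) := by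
  nth_rewrite 1 [hP]
  simp only [Measure.add_apply, Measure.smul_apply, smul_eq_mul,
    Measure.map_apply continuous_S1.measurable hA, Measure.map_apply continuous_S2.measurable hA]

lemma measure_le_of_preimage_subset (hP : SelfSimilar P) {A B : Set ℝ} (hA : MeasurableSet A)
    (h1 : S1 ⁻¹' A ⊆ B) (h2 : S2 ⁻¹' A ⊆ B) : P A ≤ P B := by
  have weights : (1 / 4 : ℝ≥0∞) + 3 / 4 = 1 := by
    rw [ENNReal.div_add_div_same, show (1 + 3 : ℝ≥0∞) = 4 by norm_num]
    exact ENNReal.div_self (by norm_num) (by norm_num)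
  calc P A = 1 / 4 * P (S1 ⁻¹' A) + 3 / 4 * P (S2 ⁻¹' A) := hP.measure_eq hA
    _ ≤ 1 / 4 * P B + 3 / 4 * P B := by gcongr
    _ = P B := by rw [← add_mul, weights, one_mul]

/-- Both maps halve the distance to `[0, 1]` at least, so the mass beyond distance `d` is at most
the mass beyond distance `2 ^ k * d` for every `k`. -/
lemma measure_lt_abs_sub_half_eq_zero [IsFiniteMeasure P] (hP : SelfSimilar P) {d : ℝ}
    (hd : 0 < d) : P {x | 1 / 2 + d < |x - 1 / 2|} = 0 := by
  set tail : ℕ → Set ℝ := fun k => {x | 1 / 2 + 2 ^ k * d < |x - 1 / 2|} with htail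
  have tail_meas (k : ℕ) : MeasurableSet (tail k) := measurableSet_lt (by fun_prop) (by fun_prop)
  have tail_le (k : ℕ) : P (tail 0) ≤ P (tail k) := by
    induction k with
    | zero => rfl
    | succ k ih =>
      refine ih.trans (hP.measure_le_of_preimage_subset (tail_meas k) ?_ ?_) <;>
      · intro x hx
        simp only [htail, mem_preimage, mem_ofPred_eq, S1, S2, lt_abs, pow_succ] at hx ⊢
        have : 0 < 2 ^ k * d := by positivity
        rcases hx with hx | hx
        · left; linarith
        · right; linarith
  have tail_anti : Antitone tail := fun i j hij x hx => by
    simp only [htail, mem_ofPred_eq] at hx ⊢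
    refine lt_of_le_of_lt ?_ hx
    gcongr
    norm_num
  have tail_inter : ⋂ k, tail k = ∅ := by
    refine eq_empty_of_forall_notMem fun x hx => ?_
    obtain ⟨k, hk⟩ := pow_unbounded_of_one_lt (|x - 1 / 2| / d) one_lt_two
    have : 1 / 2 + 2 ^ k * d < |x - 1 / 2| := mem_iInter.mp hx k
    rw [div_lt_iff₀ hd] at hk
    linarith
  have tail_tendsto := tendsto_measure_iInter_atTop (μ := P)
    (fun k => (tail_meas k).nullMeasurableSet) tail_anti ⟨0, measure_ne_top _ _⟩
  rw [tail_inter, measure_empty] at tail_tendsto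
  simpa [htail] using ge_of_tendsto' tail_tendsto tail_le

lemma ae_mem_Icc [IsFiniteMeasure P] (hP : SelfSimilar P) : ∀ᵐ x ∂P, x ∈ Icc (0 : ℝ) 1 := by
  have hle (k : ℕ) : ∀ᵐ x ∂P, |x - 1 / 2| ≤ 1 / 2 + 1 / ((k : ℝ) + 1) := by
    simpa only [ae_iff, not_le] using hP.measure_lt_abs_sub_half_eq_zero Nat.one_div_pos_of_nat
  filter_upwards [ae_all_iff.mpr hle] with x hx
  have : |x - 1 / 2| ≤ 1 / 2 := le_of_forall_pos_lt_add fun ε hε => by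
    obtain ⟨k, hk⟩ := exists_nat_one_div_lt hε
    linarith [hx k]
  rw [abs_le] at this
  constructor <;> linarith

lemma ae_mem_union_Icc [IsFiniteMeasure P] (hP : SelfSimilar P) :
    ∀ᵐ x ∂P, x ∈ Icc (0 : ℝ) (1 / 4) ∪ Icc (1 / 2) 1 := by
  refine nonpos_iff_eq_zero.mp ((hP.measure_le_of_preimage_subset (B := (Icc 0 1)ᶜ)
    (measurableSet_Icc.union measurableSet_Icc).compl ?_ ?_).trans_eq hP.ae_mem_Icc)
  · intro x hx hx01
    refine hx (Or.inl ?_)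
    simp only [mem_Icc, S1] at hx01 ⊢
    constructor <;> linarith
  · intro x hx hx01
    refine hx (Or.inr ?_)
    simp only [mem_Icc, S2] at hx01 ⊢
    constructor <;> linarith

lemma mapsTo_S1_support (hP : SelfSimilar P) : MapsTo S1 P.support P.support :=
  mapsTo_support_of_smul_map_le continuous_S1 (c := 1 / 4) (by simp)
    ((Measure.le_add_right le_rfl).trans (Eq.ge hP))

lemma mapsTo_S2_support (hP : SelfSimilar P) : MapsTo S2 P.support P.support :=
  mapsTo_support_of_smul_map_le continuous_S2 (c := 3 / 4) (by simp)
    ((Measure.le_add_left le_rfl).trans (Eq.ge hP))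

/-- On a finite support the injective map `S1` would be onto, but it misses the image of `S2`. -/
lemma support_infinite [IsFiniteMeasure P] [NeZero P] (hP : SelfSimilar P) :
    P.support.Infinite := by
  intro hfin
  have hsub : P.support ⊆ Icc 0 1 :=
    Measure.support_subset_of_isClosed isClosed_Icc hP.ae_mem_Icc
  have S1_inj : InjOn S1 P.support := fun x _ y _ h => by simpa [S1] using h
  have S1_surj : SurjOn S1 P.support P.support :=
    ((hfin.injOn_iff_bijOn_of_mapsTo hP.mapsTo_S1_support).mp S1_inj).surjOn
  obtain ⟨x, hx⟩ : P.support.Nonempty := Measure.nonempty_support (NeZero.ne P)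
  obtain ⟨y, hy, hyx⟩ := S1_surj (hP.mapsTo_S2_support hx)
  simp only [S1, S2] at hyx
  linarith [(hsub hx).1, (hsub hy).2]

end Measure

section Integral

variable {P : Measure ℝ} [IsProbabilityMeasure P] {f g : ℝ → ℝ} {β : Finset ℝ}

lemma integrable (hP : SelfSimilar P) (hf : Continuous f) : Integrable f P := by
  obtain ⟨C, hC⟩ := (isCompact_Icc (a := (0 : ℝ)) (b := 1)).exists_bound_of_continuousOn
    hf.continuousOn
  exact Integrable.of_bound hf.aestronglyMeasurable C (hP.ae_mem_Icc.mono hC)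

lemma integrable_minSqDist (hP : SelfSimilar P) (hβ : β.Nonempty) :
    Integrable (minSqDist β) P :=
  hP.integrable (continuous_minSqDist hβ)

lemma distortion_anti (hP : SelfSimilar P) {α : Finset ℝ} (hα : α.Nonempty) (h : α ⊆ β) :
    distortion P β ≤ distortion P α :=
  MeasureTheory.integral_mono (hP.integrable_minSqDist (hα.mono h)) (hP.integrable_minSqDist hα)
    (minSqDist_anti hα h)

lemma integral_mono (hP : SelfSimilar P) (hf : Continuous f) (hg : Continuous g)
    (h : ∀ x ∈ Icc (0 : ℝ) 1, f x ≤ g x) : ∫ x, f x ∂P ≤ ∫ x, g x ∂P :=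
  integral_mono_ae (hP.integrable hf) (hP.integrable hg) (hP.ae_mem_Icc.mono h)

lemma integral_eq (hP : SelfSimilar P) (hf : Continuous f) :
    ∫ x, f x ∂P = 1 / 4 * ∫ x, f (S1 x) ∂P + 3 / 4 * ∫ x, f (S2 x) ∂P := by
  have hf1 : Integrable f (P.map S1) :=
    (integrable_map_measure hf.aestronglyMeasurable continuous_S1.aemeasurable).mpr
      (hP.integrable (hf.comp continuous_S1))
  have hf2 : Integrable f (P.map S2) :=
    (integrable_map_measure hf.aestronglyMeasurable continuous_S2.aemeasurable).mpr
      (hP.integrable (hf.comp continuous_S2))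
  nth_rewrite 1 [hP]
  rw [integral_add_measure (hf1.smul_measure (by finiteness)) (hf2.smul_measure (by finiteness)),
    integral_smul_measure, integral_smul_measure,
    integral_map continuous_S1.aemeasurable hf.aestronglyMeasurable,
    integral_map continuous_S2.aemeasurable hf.aestronglyMeasurable]
  simp only [ENNReal.toReal_div, ENNReal.toReal_one, ENNReal.toReal_ofNat, smul_eq_mul]

lemma integral_id (hP : SelfSimilar P) : ∫ x, x ∂P = 2 / 3 := by
  have hsplit := hP.integral_eq continuous_id
  have h1 : ∫ x, S1 x ∂P = (∫ x, x ∂P) / 4 := integral_div 4 _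
  have h2 : ∫ x, S2 x ∂P = (∫ x, x ∂P) / 2 + 1 / 2 := by
    simp only [S2]
    rw [integral_add (hP.integrable (by fun_prop)) (integrable_const _), integral_div]
    simp
  simp only [id_eq, h1, h2] at hsplit
  linarith

lemma integral_quadratic (hP : SelfSimilar P) (A B C : ℝ) :
    ∫ x, (A * x ^ 2 + B * x + C) ∂P = A * ∫ x, x ^ 2 ∂P + B * ∫ x, x ∂P + C := by
  rw [integral_add (hP.integrable (by fun_prop)) (integrable_const C),
    integral_add (hP.integrable (by fun_prop)) (hP.integrable (by fun_prop)),
    integral_const_mul, integral_const_mul]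
  simp

lemma integral_sq (hP : SelfSimilar P) : ∫ x, x ^ 2 ∂P = 28 / 51 := by
  have hsplit := hP.integral_eq (f := fun x => x ^ 2) (by fun_prop)
  have h1 : ∫ x, S1 x ^ 2 ∂P = (∫ x, x ^ 2 ∂P) / 16 := by
    simp only [S1, div_pow, integral_div]
    norm_num
  have h2 : ∫ x, S2 x ^ 2 ∂P = 1 / 4 * ∫ x, x ^ 2 ∂P + 1 / 2 * ∫ x, x ∂P + 1 / 4 := by
    rw [← hP.integral_quadratic]
    congr 1 with x
    unfold S2
    ring
  rw [h1, h2, hP.integral_id] at hsplit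
  linarith

lemma integral_le_of_le_quadratic (hP : SelfSimilar P) (hf : Continuous f) (A B C : ℝ)
    (h : ∀ x ∈ Icc (0 : ℝ) 1, f x ≤ A * x ^ 2 + B * x + C) :
    ∫ x, f x ∂P ≤ A * (28 / 51) + B * (2 / 3) + C := by
  rw [← hP.integral_sq, ← hP.integral_id, ← hP.integral_quadratic]
  exact hP.integral_mono hf (by fun_prop) h

lemma le_integral_of_quadratic_le (hP : SelfSimilar P) (hf : Continuous f) (A B C : ℝ)
    (h : ∀ x ∈ Icc (0 : ℝ) 1, A * x ^ 2 + B * x + C ≤ f x) :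
    A * (28 / 51) + B * (2 / 3) + C ≤ ∫ x, f x ∂P := by
  rw [← hP.integral_sq, ← hP.integral_id, ← hP.integral_quadratic]
  exact hP.integral_mono (by fun_prop) hf h

/-- `16 / 153` is the variance of `P`. -/
lemma integral_sub_sq (hP : SelfSimilar P) (c : ℝ) :
    ∫ x, (x - c) ^ 2 ∂P = 16 / 153 + (c - 2 / 3) ^ 2 := by
  have hexpand (x : ℝ) : (x - c) ^ 2 = 1 * x ^ 2 + -2 * c * x + c ^ 2 := by ring
  simp only [hexpand, hP.integral_quadratic, hP.integral_sq, hP.integral_id]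
  ring

lemma integral_minSqDist_comp_le (hP : SelfSimilar P) {c : ℝ} (hc : c ∈ β) {T : ℝ → ℝ} {r s : ℝ}
    (hT : ∀ x, T x = r * x + s) :
    ∫ x, minSqDist β (T x) ∂P ≤ r ^ 2 * (16 / 153) + (r * (2 / 3) + s - c) ^ 2 := by
  simp only [hT]
  refine (hP.integral_le_of_le_quadratic ((continuous_minSqDist ⟨c, hc⟩).comp (by fun_prop))
    (r ^ 2) (2 * r * (s - c)) ((s - c) ^ 2) fun x _ => ?_).trans_eq (by ring)
  exact (minSqDist_le hc _).trans_eq (by ring)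

lemma distortion_eq_add_add (hP : SelfSimilar P) (hβ : β.Nonempty) :
    distortion P β = 1 / 4 * ∫ x, minSqDist β (S1 x) ∂P
      + 3 / 16 * ∫ x, minSqDist β (S2 (S1 x)) ∂P + 9 / 16 * ∫ x, minSqDist β (S2 (S2 x)) ∂P := by
  have hsplit := hP.integral_eq (continuous_minSqDist hβ)
  have hsplit2 := hP.integral_eq ((continuous_minSqDist hβ).comp continuous_S2)
  simp only [Function.comp_apply] at hsplit2
  rw [distortion_eq_integral_minSqDist, hsplit, hsplit2]
  ring

end Integral

end SelfSimilar

/-! ### Optimal sets with a point in the gap -/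

section Optimal

variable {P : Measure ℝ} [IsProbabilityMeasure P] {n : ℕ} {α : Finset ℝ} {a c e x z : ℝ}

namespace IsOptimal

lemma lt_or_lt_of_mem_Ioo (hα : IsOptimal P n α) (hP : SelfSimilar P) (ha : a ∈ α)
    (hgap : a ∈ Ioo (1 / 4 : ℝ) (1 / 2)) (hz : z ∈ α) (hza : z ≠ a) :
    z < 1 / 2 - a ∨ 1 - a < z := by
  by_contra! hnear
  have no_swap := hα.not_ae_sq_sub_lt_or_le (fun _ => hP.integrable_minSqDist) hP.support_infinite
    ha hz hza
  rcases hza.lt_or_gt with hlt | hgt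
  · refine no_swap (1 / 2) ?_
    filter_upwards [hP.ae_mem_union_Icc] with x hx
    rcases hx with hx | hx
    · right; nlinarith [hx.2, hgap.1]
    · left; nlinarith [hx.1, hgap.2]
  · refine no_swap (1 / 4) ?_
    filter_upwards [hP.ae_mem_union_Icc] with x hx
    rcases hx with hx | hx
    · left; nlinarith [hx.2, hgap.1]
    · right; nlinarith [hx.1, hgap.2]

lemma le_one (hα : IsOptimal P n α) (hP : SelfSimilar P) (hz : z ∈ α) (ha : a ∈ α)
    (haz : a ≠ z) : z ≤ 1 := by
  by_contra! hlt
  refine hα.not_ae_sq_sub_lt_or_le (fun _ => hP.integrable_minSqDist) hP.support_infinite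
    hz ha haz 1 ?_
  filter_upwards [hP.ae_mem_Icc] with x hx
  left
  nlinarith [hx.2]

end IsOptimal

lemma SelfSimilar.le_integral_minSqDist_S1 (hP : SelfSimilar P) (hα : α.Nonempty)
    (ha : a ≤ 1 / 2) (hsep : ∀ z ∈ α, z = a ∨ z < 1 / 2 - a ∨ 1 - a < z) :
    9 / 16 * (a / 6 - 5 / 96) ≤ ∫ x, minSqDist α (S1 x) ∂P := by
  have hcont := continuous_minSqDist hα
  have hpiece : a / 6 - 5 / 96 ≤ ∫ x, minSqDist α (S1 (S2 (S2 x))) ∂P := by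
    refine Eq.trans_le (by ring) (hP.le_integral_of_quadratic_le
      (hcont.comp (continuous_S1.comp (continuous_S2.comp continuous_S2)))
      0 (1 / 96) (a / 6 - 17 / 288) fun x hx => ?_)
    have hdist : ∀ z ∈ α, S1 (S2 (S2 x)) - (1 / 2 - a) ≤ |S1 (S2 (S2 x)) - z| := by
      intro z hz
      simp only [S1, S2]
      rcases hsep z hz with rfl | hlt | hgt
      · exact le_abs.mpr (Or.inr (by linarith [hx.2]))
      · exact le_abs.mpr (Or.inl (by linarith))
      · exact le_abs.mpr (Or.inr (by linarith [hx.2]))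
    refine Eq.trans_le ?_ (tangent_le_minSqDist hα (l := 1 / 12) (by norm_num) hdist)
    simp only [S1, S2]
    ring
  have hsplit := hP.integral_eq (hcont.comp continuous_S1)
  have hsplit2 := hP.integral_eq (hcont.comp (continuous_S1.comp continuous_S2))
  simp only [Function.comp_apply] at hsplit hsplit2
  have h1 : 0 ≤ ∫ x, minSqDist α (S1 (S1 x)) ∂P := integral_nonneg fun _ => minSqDist_nonneg α _
  have h21 : 0 ≤ ∫ x, minSqDist α (S1 (S2 (S1 x))) ∂P :=
    integral_nonneg fun _ => minSqDist_nonneg α _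
  linarith

/-- The competitor obtained from `α` by trading its points up to `a` for the two points `1 / 6`,
the barycentre of `P` on `[0, 1 / 4]`, and `c`. -/
def replaceUpTo (α : Finset ℝ) (a c : ℝ) : Finset ℝ :=
  insert (1 / 6) (insert c (α.filter (a < ·)))

lemma minSqDist_replaceUpTo_le (hα : α.Nonempty) (hac : a ≤ c) (hca : c ≤ 1 - a)
    (hx : 1 / 2 ≤ x) : minSqDist (replaceUpTo α a c) x ≤ minSqDist α x := by
  obtain ⟨z, hz, hxz⟩ := exists_minSqDist_eq hα x
  rw [hxz]
  rcases le_or_gt z a with hza | haz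
  · refine (minSqDist_le (a := c) (by simp [replaceUpTo]) x).trans ?_
    nlinarith
  · exact minSqDist_le (by simp [replaceUpTo, hz, haz]) x

/-- No point of `α` up to `a` is closer to `x` than `1 - a` is, and moving a point from `1 - a` to
`c` gains `(1 - a - c) * (1 - a + c - 2 * x)` at `x`. -/
lemma minSqDist_replaceUpTo_le_sub (hα : α.Nonempty)
    (hgap : a ∈ Ioo (1 / 4 : ℝ) (1 / 2)) (hsep : ∀ z ∈ α, z = a ∨ z < 1 / 2 - a ∨ 1 - a < z)
    (hac : a ≤ c) (hca : c ≤ 1 - a) (hx : 1 / 2 ≤ x) :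
    minSqDist (replaceUpTo α a c) x
      ≤ minSqDist α x - (1 - a - c) * (1 - a + c - 2 * x) := by
  rcases le_or_gt (1 - a + c) (2 * x) with hgain | hgain
  · have : (1 - a - c) * (1 - a + c - 2 * x) ≤ 0 :=
      mul_nonpos_of_nonneg_of_nonpos (by linarith) (by linarith)
    linarith [minSqDist_replaceUpTo_le hα hac hca hx]
  · have hold : (x - (1 - a)) ^ 2 ≤ minSqDist α x := by
      refine le_minSqDist hα fun z hz => ?_
      rcases hsep z hz with rfl | hlt | hgt
      · nlinarith [hgap.2]
      · nlinarith [hgap.1, hgap.2]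
      · nlinarith
    calc minSqDist (replaceUpTo α a c) x ≤ (x - c) ^ 2 :=
          minSqDist_le (by simp [replaceUpTo]) x
      _ = (x - (1 - a)) ^ 2 - (1 - a - c) * (1 - a + c - 2 * x) := by ring
      _ ≤ _ := by linarith

lemma SelfSimilar.integral_minSqDist_replaceUpTo_S2_S1_le (hP : SelfSimilar P) (hα : α.Nonempty)
    (hgap : a ∈ Ioo (1 / 4 : ℝ) (1 / 2)) (hsep : ∀ z ∈ α, z = a ∨ z < 1 / 2 - a ∨ 1 - a < z)
    (hac : a ≤ c) (hca : c ≤ 1 - a) :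
    ∫ x, minSqDist (replaceUpTo α a c) (S2 (S1 x)) ∂P
      ≤ ∫ x, minSqDist α (S2 (S1 x)) ∂P - (1 - a - c) * (c - a - 1 / 6) := by
  have hS21 := continuous_S2.comp continuous_S1
  have hF := (continuous_minSqDist hα).comp hS21
  have hG := (continuous_minSqDist (α := replaceUpTo α a c) (Finset.insert_nonempty _ _)).comp hS21
  have hgain : (1 - a - c) * (c - a - 1 / 6) ≤ ∫ x, (minSqDist α (S2 (S1 x))
      - minSqDist (replaceUpTo α a c) (S2 (S1 x))) ∂P := by
    refine Eq.trans_le (by ring) (hP.le_integral_of_quadratic_le (hF.sub hG)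
      0 (-(1 - a - c) / 4) ((1 - a - c) * (c - a)) fun x hx => ?_)
    have hx' : 1 / 2 ≤ S2 (S1 x) := by simp only [S1, S2]; linarith [hx.1]
    have hpoint := minSqDist_replaceUpTo_le_sub hα hgap hsep hac hca hx'
    simp only [Pi.sub_apply, Function.comp_apply, S1, S2] at hpoint ⊢
    linarith
  have hsub := integral_sub (hP.integrable hF) (hP.integrable hG)
  simp only [Function.comp_apply] at hsub
  linarith

lemma card_replaceUpTo_le (ha : a ∈ α) (he : e ∈ α) (hea : e < a) (c : ℝ) :
    (replaceUpTo α a c).card ≤ α.card := by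
  have ha' : a ∉ α.filter (a < ·) := by simp
  have he' : e ∉ insert a (α.filter (a < ·)) := by simp [hea.ne, hea.le]
  have hsub : insert e (insert a (α.filter (a < ·))) ⊆ α := by
    simp [Finset.insert_subset_iff, ha, he]
  calc (replaceUpTo α a c).card ≤ (α.filter (a < ·)).card + 1 + 1 :=
        (Finset.card_insert_le _ _).trans (Nat.succ_le_succ (Finset.card_insert_le _ _))
    _ = (insert e (insert a (α.filter (a < ·)))).card := by
        rw [Finset.card_insert_of_notMem he', Finset.card_insert_of_notMem ha']
    _ ≤ α.card := Finset.card_le_card hsub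

namespace IsOptimal

lemma eq_or_lt_or_lt_of_mem_Ioo (hα : IsOptimal P n α) (hP : SelfSimilar P) (ha : a ∈ α)
    (hgap : a ∈ Ioo (1 / 4 : ℝ) (1 / 2)) :
    ∀ z ∈ α, z = a ∨ z < 1 / 2 - a ∨ 1 - a < z := fun z hz =>
  (eq_or_ne z a).imp_right (hα.lt_or_lt_of_mem_Ioo hP ha hgap hz)

lemma cost_le_of_lt_of_mem_Ioo (hα : IsOptimal P n α) (hP : SelfSimilar P) (ha : a ∈ α)
    (hgap : a ∈ Ioo (1 / 4 : ℝ) (1 / 2)) (he : e ∈ α) (hea : e < a) (hac : a ≤ c)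
    (hca : c ≤ 1 - a) :
    9 / 64 * (a / 6 - 5 / 96) + 3 / 16 * ((1 - a - c) * (c - a - 1 / 6)) ≤ 1 / 612 := by
  set β := replaceUpTo α a c with hβ
  have hsep := hα.eq_or_lt_or_lt_of_mem_Ioo hP ha hgap
  have hβ_ne : β.Nonempty := Finset.insert_nonempty _ _
  have hF := continuous_minSqDist hα.1
  have hG := continuous_minSqDist hβ_ne
  have hS22 := continuous_S2.comp continuous_S2
  have hopt : distortion P α ≤ distortion P β :=
    hα.distortion_le hβ_ne ((card_replaceUpTo_le ha he hea c).trans hα.2.1)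
  have hβ1 : ∫ x, minSqDist β (S1 x) ∂P
      ≤ (1 / 4) ^ 2 * (16 / 153) + (1 / 4 * (2 / 3) + 0 - 1 / 6) ^ 2 :=
    hP.integral_minSqDist_comp_le (by simp [hβ, replaceUpTo]) fun x => by unfold S1; ring
  have hα1 := hP.le_integral_minSqDist_S1 hα.1 hgap.2.le hsep
  have h22 : ∫ x, minSqDist β (S2 (S2 x)) ∂P ≤ ∫ x, minSqDist α (S2 (S2 x)) ∂P := by
    refine hP.integral_mono (hG.comp hS22) (hF.comp hS22) fun x hx => ?_
    refine minSqDist_replaceUpTo_le hα.1 hac hca ?_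
    simp only [S2]
    linarith [hx.1]
  have h21 : ∫ x, minSqDist β (S2 (S1 x)) ∂P ≤
      ∫ x, minSqDist α (S2 (S1 x)) ∂P - (1 - a - c) * (c - a - 1 / 6) :=
    hP.integral_minSqDist_replaceUpTo_S2_S1_le hα.1 hgap hsep hac hca
  rw [hP.distortion_eq_add_add hα.1, hP.distortion_eq_add_add hβ_ne] at hopt
  linarith

/-- With a second point to the left of `a`, moving `a` to the mean `7 / 12` of `P` on
`[1 / 2, 5 / 8]`, or to `1 - a` when that is closer, pays for serving `[0, 1 / 4]` by `1 / 6`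
alone. -/
lemma le_of_mem_Ioo (hα : IsOptimal P n α) (hP : SelfSimilar P) (ha : a ∈ α)
    (hgap : a ∈ Ioo (1 / 4 : ℝ) (1 / 2)) (hz : z ∈ α) : a ≤ z := by
  by_contra! hza
  have hcost {c : ℝ} := hα.cost_le_of_lt_of_mem_Ioo (c := c) hP ha hgap hz hza
  rcases le_total a (5 / 12) with ha' | ha'
  · nlinarith [hcost (c := 7 / 12) (by linarith) (by linarith), sq_nonneg (a - 17 / 48)]
  · linarith [hcost (c := 1 - a) (by linarith [hgap.2]) le_rfl]

lemma eq_or_lt_of_mem_Ioo (hα : IsOptimal P n α) (hP : SelfSimilar P) (ha : a ∈ α)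
    (hgap : a ∈ Ioo (1 / 4 : ℝ) (1 / 2)) : ∀ z ∈ α, z = a ∨ 1 - a < z := fun z hz =>
  (hα.eq_or_lt_or_lt_of_mem_Ioo hP ha hgap z hz).imp_right fun h =>
    h.resolve_left (by linarith [hα.le_of_mem_Ioo hP ha hgap hz, hgap.1])

end IsOptimal

lemma SelfSimilar.distortion_triple_le (hP : SelfSimilar P) :
    distortion P {1 / 6, 7 / 12, 11 / 12} ≤ 55 / 9792 := by
  rw [hP.distortion_eq_add_add (by simp)]
  have h1 := hP.integral_minSqDist_comp_le (β := {1 / 6, 7 / 12, 11 / 12}) (c := 1 / 6) (by simp)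
    (T := S1) (r := 1 / 4) (s := 0) fun x => by unfold S1; ring
  have h21 := hP.integral_minSqDist_comp_le (β := {1 / 6, 7 / 12, 11 / 12}) (c := 7 / 12) (by simp)
    (T := fun x => S2 (S1 x)) (r := 1 / 8) (s := 1 / 2) fun x => by simp only [S1, S2]; ring
  have h22 := hP.integral_minSqDist_comp_le (β := {1 / 6, 7 / 12, 11 / 12}) (c := 11 / 12)
    (by simp) (T := fun x => S2 (S2 x)) (r := 1 / 4) (s := 3 / 4) fun x => by simp only [S2]; ring
  linarith

lemma SelfSimilar.le_distortion_of_forall_eq_or_lt (hP : SelfSimilar P) (ha : a ∈ α)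
    (hgap : a ∈ Ioo (1 / 4 : ℝ) (1 / 2)) (hmin : ∀ z ∈ α, z = a ∨ 1 - a < z) :
    1 / 4 * (1 / 153 + (a - 1 / 6) ^ 2) + 3 / 16 * ((5 / 12 - a) / 4 - 1 / 64)
      ≤ distortion P α := by
  have hα : α.Nonempty := ⟨a, ha⟩
  have hcont := continuous_minSqDist hα
  have h1 : 1 / 153 + (a - 1 / 6) ^ 2 ≤ ∫ x, minSqDist α (S1 x) ∂P := by
    refine Eq.trans_le (by ring) (hP.le_integral_of_quadratic_le (hcont.comp continuous_S1)
      (1 / 16) (-a / 2) (a ^ 2) fun x hx => ?_)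
    refine Eq.trans_le (by ring) (le_minSqDist (m := (x / 4 - a) ^ 2) hα fun z hz => ?_)
    have haz : a ≤ z := (hmin z hz).elim Eq.ge fun h => by linarith [hgap.2]
    unfold S1
    nlinarith [hx.2, hgap.1]
  have h21 : (5 / 12 - a) / 4 - 1 / 64 ≤ ∫ x, minSqDist α (S2 (S1 x)) ∂P := by
    refine Eq.trans_le (by ring) (hP.le_integral_of_quadratic_le
      (hcont.comp (continuous_S2.comp continuous_S1)) 0 (-(1 / 32)) ((1 / 2 - a) / 4 - 1 / 64)
      fun x hx => ?_)
    have hdist : ∀ z ∈ α, 1 - a - S2 (S1 x) ≤ |S2 (S1 x) - z| := by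
      intro z hz
      simp only [S1, S2]
      rcases hmin z hz with rfl | hgt
      · exact le_abs.mpr (Or.inl (by linarith [hx.1]))
      · exact le_abs.mpr (Or.inr (by linarith))
    refine Eq.trans_le ?_ (tangent_le_minSqDist hα (l := 1 / 8) (by norm_num) hdist)
    simp only [S1, S2]
    ring
  have h22 : 0 ≤ ∫ x, minSqDist α (S2 (S2 x)) ∂P := integral_nonneg fun _ => minSqDist_nonneg α _
  rw [hP.distortion_eq_add_add hα]
  linarith

lemma IsOptimal.le_two_of_mem_Ioo (hα : IsOptimal P n α) (hP : SelfSimilar P) (ha : a ∈ α)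
    (hgap : a ∈ Ioo (1 / 4 : ℝ) (1 / 2)) : n ≤ 2 := by
  by_contra! hn
  have hlower := hP.le_distortion_of_forall_eq_or_lt ha hgap (hα.eq_or_lt_of_mem_Ioo hP ha hgap)
  have hopt := hα.distortion_le (β := {1 / 6, 7 / 12, 11 / 12}) (by simp)
    (Finset.card_le_three.trans hn)
  nlinarith [hP.distortion_triple_le, sq_nonneg (a - 25 / 96)]

end Optimal

/-! ### Two points -/

section LowerPartialMoment

/-- The first lower partial moment `E (t - X)⁺` of a law `μ` on the line. For a pair of points it
determines the distortion. -/
def lowerPartialMoment (μ : Measure ℝ) (t : ℝ) : ℝ :=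
  ∫ x, max (t - x) 0 ∂μ

namespace SelfSimilar

variable {P : Measure ℝ} [IsProbabilityMeasure P] {a b t w : ℝ}

lemma distortion_pair (hP : SelfSimilar P) (hab : a ≤ b) :
    distortion P {a, b} = 16 / 153 + (b - 2 / 3) ^ 2
      - 2 * (b - a) * lowerPartialMoment P ((a + b) / 2) := by
  have hpoint (x : ℝ) : minSqDist {a, b} x
      = (x - b) ^ 2 - 2 * (b - a) * max ((a + b) / 2 - x) 0 := by
    rw [minSqDist_pair]
    rcases le_total x ((a + b) / 2) with hx | hx
    · rw [min_eq_left (by nlinarith), max_eq_left (by linarith)]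
      ring
    · rw [min_eq_right (by nlinarith), max_eq_right (by linarith)]
      ring
  simp only [distortion_eq_integral_minSqDist, hpoint]
  rw [integral_sub (hP.integrable (by fun_prop)) (hP.integrable (by fun_prop)),
    integral_const_mul, hP.integral_sub_sq, lowerPartialMoment]

lemma lowerPartialMoment_eq (hP : SelfSimilar P) (t : ℝ) :
    lowerPartialMoment P t = lowerPartialMoment P (4 * t) / 16
      + 3 / 8 * lowerPartialMoment P (2 * t - 1) := by
  have h1 (x : ℝ) : max (t - S1 x) 0 = max (4 * t - x) 0 / 4 := by
    rw [← max_div_div_right (by norm_num), zero_div, S1]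
    ring_nf
  have h2 (x : ℝ) : max (t - S2 x) 0 = max (2 * t - 1 - x) 0 / 2 := by
    rw [← max_div_div_right (by norm_num), zero_div, S2]
    ring_nf
  have hsplit := hP.integral_eq (f := fun x => max (t - x) 0) (by fun_prop)
  simp only [h1, h2, integral_div] at hsplit
  simp only [lowerPartialMoment]
  linarith

lemma lowerPartialMoment_of_nonpos (hP : SelfSimilar P) (ht : t ≤ 0) :
    lowerPartialMoment P t = 0 := by
  refine integral_eq_zero_of_ae ?_
  filter_upwards [hP.ae_mem_Icc] with x hx
  exact max_eq_right (by linarith [hx.1])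

lemma lowerPartialMoment_of_one_le (hP : SelfSimilar P) (ht : 1 ≤ t) :
    lowerPartialMoment P t = t - 2 / 3 := by
  have hpos : ∀ᵐ x ∂P, max (t - x) 0 = t - x := by
    filter_upwards [hP.ae_mem_Icc] with x hx
    exact max_eq_left (by linarith [hx.2])
  rw [lowerPartialMoment, integral_congr_ae hpos,
    integral_sub (integrable_const t) (hP.integrable (by fun_prop)), hP.integral_id]
  simp

/-- On `[0, 1]` the convex function `w ↦ (w - x)⁺` lies below its chord `w ↦ w * (1 - x)`. -/
lemma lowerPartialMoment_le_div_three (hP : SelfSimilar P) (hw : w ∈ Icc (0 : ℝ) 1) :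
    lowerPartialMoment P w ≤ w / 3 := by
  refine (hP.integral_le_of_le_quadratic (by fun_prop) 0 (-w) w fun x hx => ?_).trans_eq (by ring)
  exact max_le (by nlinarith [hx.1, hw.2]) (by nlinarith [hx.2, hw.1])

lemma lowerPartialMoment_le_sq_of_quarter_le (hP : SelfSimilar P) (ht : t ∈ Icc (1 / 4 : ℝ) 1) :
    lowerPartialMoment P t ≤ 3 / 8 * t ^ 2 := by
  rw [hP.lowerPartialMoment_eq, hP.lowerPartialMoment_of_one_le (by linarith [ht.1])]
  rcases le_total t (1 / 2) with hhalf | hhalf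
  · rw [hP.lowerPartialMoment_of_nonpos (by linarith)]
    linarith [sq_nonneg (t - 1 / 3)]
  · have := hP.lowerPartialMoment_le_div_three (w := 2 * t - 1)
      ⟨by linarith, by linarith [ht.2]⟩
    linarith [sq_nonneg (t - 2 / 3)]

/-- On `(0, 1 / 4)` the recursion reduces to `Φ t = Φ (4 * t) / 16`, which is the scaling of `t²`.
The constant `3 / 8` is attained at `t = 1 / 3`. -/
lemma lowerPartialMoment_le_sq (hP : SelfSimilar P) (ht : t ≤ 1) :
    lowerPartialMoment P t ≤ 3 / 8 * t ^ 2 := by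
  rcases le_or_gt t 0 with hneg | hpos
  · rw [hP.lowerPartialMoment_of_nonpos hneg]
    positivity
  have hscale (k : ℕ) : ∀ s ≤ 1, 1 ≤ 4 ^ k * (4 * s) →
      lowerPartialMoment P s ≤ 3 / 8 * s ^ 2 := by
    induction k with
    | zero =>
      intro s hs hk
      rw [pow_zero, one_mul] at hk
      exact hP.lowerPartialMoment_le_sq_of_quarter_le ⟨by linarith, hs⟩
    | succ k ih =>
      intro s hs hk
      rcases le_total (1 / 4) s with hquarter | hquarter
      · exact hP.lowerPartialMoment_le_sq_of_quarter_le ⟨hquarter, hs⟩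
      · rw [hP.lowerPartialMoment_eq,
          hP.lowerPartialMoment_of_nonpos (t := 2 * s - 1) (by linarith)]
        linarith [ih (4 * s) (by linarith) (hk.trans_eq (by ring))]
  obtain ⟨k, hk⟩ := pow_unbounded_of_one_lt (1 / t) (by norm_num : (1 : ℝ) < 4)
  refine hscale k t ht ?_
  rw [div_lt_iff₀ hpos] at hk
  linarith

end SelfSimilar

end LowerPartialMoment

/-- With `p` and `q` the offsets of a pair `{a, b}` from `{1 / 6, 5 / 6}`, the left side bounds what
the shifted cell boundary saves, and the right side is what the offsets cost inside the cells. -/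
lemma mul_sq_lt_of_le_of_le {p q : ℝ} (hp : 1 / 12 ≤ p) (hq : q ≤ 1 / 6) (hpq : 0 < p + q) :
    9 / 32 * (q - p + 2 / 3) * (p + q) ^ 2 < p ^ 2 / 4 + 3 / 4 * q ^ 2 := by
  rcases lt_or_ge q p with hlt | hge
  · calc 9 / 32 * (q - p + 2 / 3) * (p + q) ^ 2 < 9 / 32 * (2 / 3) * (p + q) ^ 2 := by
          gcongr
          linarith
      _ ≤ p ^ 2 / 4 + 3 / 4 * q ^ 2 := by linarith [sq_nonneg (p - 3 * q)]
  · calc 9 / 32 * (q - p + 2 / 3) * (p + q) ^ 2 ≤ 9 / 32 * (3 / 4) * (p + q) ^ 2 := by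
          gcongr
          linarith
      _ < 1 / 4 * (p + q) ^ 2 := by
          gcongr
          norm_num
      _ ≤ p ^ 2 / 4 + 3 / 4 * q ^ 2 := by nlinarith

/-- `{1 / 6, 5 / 6}` is the pair of barycentres of `[0, 1 / 4]` and `[1 / 2, 1]`. -/
lemma SelfSimilar.distortion_pair_lt {P : Measure ℝ} [IsProbabilityMeasure P] {a b : ℝ}
    (hP : SelfSimilar P) (hgap : a ∈ Ioo (1 / 4 : ℝ) (1 / 2)) (hab : 1 - a < b) (hb : b ≤ 1) :
    distortion P {1 / 6, 5 / 6} < distortion P {a, b} := by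
  have hhalf : lowerPartialMoment P (1 / 2) = 1 / 12 := by
    rw [hP.lowerPartialMoment_eq, hP.lowerPartialMoment_of_one_le (by norm_num),
      hP.lowerPartialMoment_of_nonpos (by norm_num)]
    norm_num
  have hmid : lowerPartialMoment P ((a + b) / 2)
      ≤ ((a + b) / 2 - 1 / 6) / 4 + 9 / 64 * (a + b - 1) ^ 2 := by
    rw [hP.lowerPartialMoment_eq, hP.lowerPartialMoment_of_one_le (by linarith)]
    have := hP.lowerPartialMoment_le_sq (t := 2 * ((a + b) / 2) - 1) (by linarith [hgap.2])
    linarith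
  have hcost : 9 / 32 * (b - a) * (a + b - 1) ^ 2
      < (a - 1 / 6) ^ 2 / 4 + 3 / 4 * (b - 5 / 6) ^ 2 := by
    convert mul_sq_lt_of_le_of_le (p := a - 1 / 6) (q := b - 5 / 6) (by linarith [hgap.1])
      (by linarith) (by linarith) using 2 <;> ring
  have hscaled := mul_le_mul_of_nonneg_left hmid (by linarith [hgap.2] : 0 ≤ 2 * (b - a))
  rw [hP.distortion_pair (by norm_num), hP.distortion_pair (by linarith [hgap.2]),
    show (1 / 6 + 5 / 6 : ℝ) / 2 = 1 / 2 by norm_num, hhalf]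
  linarith

namespace IsOptimal

variable {P : Measure ℝ} [IsProbabilityMeasure P] {α : Finset ℝ} {a : ℝ}

lemma exists_subset_pair (hα : IsOptimal P 2 α) (hP : SelfSimilar P) (ha : a ∈ α)
    (hgap : a ∈ Ioo (1 / 4 : ℝ) (1 / 2)) : ∃ b, 1 - a < b ∧ b ≤ 1 ∧ α ⊆ {a, b} := by
  have hcard : (α.erase a).card ≤ 1 := by
    rw [Finset.card_erase_of_mem ha]
    exact Nat.sub_le_sub_right hα.2.1 1
  by_cases hother : ∃ b ∈ α, b ≠ a
  · obtain ⟨b, hb, hba⟩ := hother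
    refine ⟨b, (hα.eq_or_lt_of_mem_Ioo hP ha hgap b hb).resolve_left hba,
      hα.le_one hP hb ha hba.symm, fun z hz => ?_⟩
    simp only [Finset.mem_insert, Finset.mem_singleton]
    exact or_iff_not_imp_left.mpr fun hza => Finset.card_le_one.mp hcard z
      (Finset.mem_erase.mpr ⟨hza, hz⟩) b (Finset.mem_erase.mpr ⟨hba, hb⟩)
  · push Not at hother
    exact ⟨1, by linarith [hgap.1], le_rfl, fun z hz => by simp [hother z hz]⟩

lemma notMem_Ioo_of_two (hα : IsOptimal P 2 α) (hP : SelfSimilar P) (ha : a ∈ α) :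
    a ∉ Ioo (1 / 4 : ℝ) (1 / 2) := by
  intro hgap
  obtain ⟨b, hab, hb, hsub⟩ := hα.exists_subset_pair hP ha hgap
  have hopt : distortion P α ≤ distortion P {1 / 6, 5 / 6} :=
    hα.distortion_le (by simp) Finset.card_le_two
  exact absurd (hP.distortion_anti hα.1 hsub) <| not_le.mpr <|
    hopt.trans_lt (hP.distortion_pair_lt hgap hab hb)

end IsOptimal

theorem stmt_12 (P : Measure ℝ) [IsProbabilityMeasure P] (hP : SelfSimilar P)
    (n : ℕ) (hn : 2 ≤ n) (α : Finset ℝ) (hα : IsOptimal P n α) :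
    ∀ a ∈ α, a ∉ Set.Ioo (1 / 4 : ℝ) (1 / 2) := by
  intro a ha hgap
  obtain rfl : n = 2 := (hα.le_two_of_mem_Ioo hP ha hgap).antisymm hn
  exact hα.notMem_Ioo_of_two hP ha hgap
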